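/- arXiv:2212.02986 — 2 statements merged into one kernel-verified Lean document; each statement's English description precedes it below -/
import Mathlib

section
/- $\sum_{n=1}^{\infty} \frac{21n-8}{n^3 \binom{2n}{n}^3}\left(H_{2n-1}^{(2)} - \frac{25}{8} H_{n-1}^{(2)}\right) = \frac{47\pi^4}{2880}$. -/
open Filter Topology

/-- Generalized harmonic number `H_n^{(s)} = ∑_{k=1}^n 1/k^s`. -/
noncomputable def H (s n : ℕ) : ℝ := ∑ k ∈ Finset.range n, 1 / ((k:ℝ) + 1) ^ s

/-!
Zeilberger's series `∑ (21n - 8) / (n³ C(2n, n)³) = ζ(2)` has a WZ proof: for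
`F(n, k) = n!⁴ (n + k)!² / ((2n)! (2n + k + 1)!²)` there is a rational function `R` such that `F`
and `G = F R` satisfy `F(n, k) - F(n + 1, k) = G(n, k) - G(n, k + 1)`, the terms of the series are
the values `G(n, 0)`, and `F(0, k) = 1 / (k + 1)²`. To produce harmonic numbers, deform `F`: in
`n!⁴`, `(n + k)!²` and `(2n + k + 1)!²`, replace the factors `j²` of `m!² = ∏ j²` by
`j² - 11 ε / 8`, `j² - 3 ε / 8` and `j² - ε`. The first order part of `F` in `ε` is `F h` with
`h = H⁽²⁾(2n + k + 1) - 3/8 H⁽²⁾(n + k) - 11/4 H⁽²⁾(n)`, and to first order the WZ equation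
survives with a suitable deformation of `R`. At `k = 0` the weight `h` is the combination of
harmonic numbers to be summed, and at `n = 0` the sum over `k` is a polynomial in `ζ(2)` and
`ζ(4)`.
-/

section WZPair

variable {E : Type*}

theorem sum_range_sub_sum_range_of_wz [AddCommGroup E] {f g : ℕ → ℕ → E}
    (h_wz : ∀ n k, f n k - f (n + 1) k = g n k - g n (k + 1)) (N K : ℕ) :
    ∑ n ∈ Finset.range N, g n 0 - ∑ n ∈ Finset.range N, g n K =
      ∑ k ∈ Finset.range K, f 0 k - ∑ k ∈ Finset.range K, f N k := by
  simp only [← Finset.sum_sub_distrib]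
  calc ∑ n ∈ Finset.range N, (g n 0 - g n K)
      = ∑ n ∈ Finset.range N, ∑ k ∈ Finset.range K, (g n k - g n (k + 1)) := by
        simp only [Finset.sum_range_sub']
    _ = ∑ k ∈ Finset.range K, ∑ n ∈ Finset.range N, (f n k - f (n + 1) k) := by
        simp only [h_wz]
        exact Finset.sum_comm
    _ = ∑ k ∈ Finset.range K, (f 0 k - f N k) :=
        Finset.sum_congr rfl fun k _ => Finset.sum_range_sub' (f · k) N

theorem tendsto_sum_range_of_wz [SeminormedAddCommGroup E] {f g : ℕ → ℕ → E} {b : ℕ → ℝ} {L : E}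
    (h_wz : ∀ n k, f n k - f (n + 1) k = g n k - g n (k + 1))
    (h_first : Tendsto (fun K => ∑ k ∈ Finset.range K, f 0 k) atTop (𝓝 L))
    (h_mate : ∀ n, Tendsto (g n) atTop (𝓝 0))
    (h_bound : ∀ N K, ‖∑ k ∈ Finset.range K, f N k‖ ≤ b N) (hb : Tendsto b atTop (𝓝 0)) :
    Tendsto (fun N => ∑ n ∈ Finset.range N, g n 0) atTop (𝓝 L) := by
  rw [tendsto_iff_norm_sub_tendsto_zero]
  refine squeeze_zero (fun N => norm_nonneg _) (fun N => ?_) hb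
  have h_edge : Tendsto (fun K => ∑ n ∈ Finset.range N, g n K) atTop (𝓝 0) := by
    simpa only [Finset.sum_const_zero] using
      tendsto_finsetSum (Finset.range N) fun n _ => h_mate n
  have h_lim : Tendsto (fun K => ‖∑ n ∈ Finset.range N, g n 0 - ∑ n ∈ Finset.range N, g n K -
      ∑ k ∈ Finset.range K, f 0 k‖) atTop (𝓝 ‖∑ n ∈ Finset.range N, g n 0 - L‖) := by
    simpa only [sub_zero] using ((tendsto_const_nhds.sub h_edge).sub h_first).norm
  refine le_of_tendsto' h_lim fun K => ?_
  rw [sum_range_sub_sum_range_of_wz h_wz, sub_sub_cancel_left, norm_neg]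
  exact h_bound N K

end WZPair

section Harmonic

theorem H_zero (s : ℕ) : H s 0 = 0 := Finset.sum_range_zero _

theorem H_succ (s n : ℕ) : H s (n + 1) = H s n + 1 / ((n : ℝ) + 1) ^ s :=
  Finset.sum_range_succ _ _

theorem H_nonneg (s n : ℕ) : 0 ≤ H s n := Finset.sum_nonneg fun _ _ => by positivity

theorem H_monotone (s : ℕ) : Monotone (H s) :=
  monotone_nat_of_le_succ fun n => by
    rw [H_succ]
    exact le_add_of_nonneg_right (by positivity)

theorem tendsto_H_of_hasSum {s : ℕ} {L : ℝ} (h : HasSum (fun n : ℕ => 1 / (n : ℝ) ^ s) L) :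
    Tendsto (H s) atTop (𝓝 L) := by
  have hs : s ≠ 0 := Nat.ne_zero_of_lt (Real.summable_one_div_nat_pow.mp h.summable)
  have h_shift := ((hasSum_nat_add_iff' 1).mpr h).tendsto_sum_nat
  change Tendsto (fun n => H s n) atTop (𝓝 L)
  simpa [H, hs] using h_shift

theorem H_two_le_two (n : ℕ) : H 2 n ≤ 2 :=
  calc H 2 n ≤ Real.pi ^ 2 / 6 :=
        (H_monotone 2).ge_of_tendsto (tendsto_H_of_hasSum hasSum_zeta_two) n
    _ ≤ 2 := by nlinarith [Real.pi_pos, Real.pi_lt_d2]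

theorem sum_range_H_div_pow (s K : ℕ) :
    ∑ k ∈ Finset.range K, H s k / ((k : ℝ) + 1) ^ s = (H s K ^ 2 - H (2 * s) K) / 2 := by
  induction K with
  | zero => simp [H_zero]
  | succ K ih =>
    rw [Finset.sum_range_succ, ih, H_succ, H_succ, pow_mul']
    field

end Harmonic

section Kernel

/-- The WZ kernel `F(n, k) = n!⁴ (n + k)!² / ((2n)! (2n + k + 1)!²)`, written with binomial
coefficients. -/
noncomputable def wzKernel (n k : ℕ) : ℝ :=
  1 / (n.centralBinom * (((n : ℝ) + k + 1) * (2 * n + k + 1).choose n) ^ 2)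

/-- The rational WZ certificate `R` of `wzKernel`: the WZ mate of `F` is `F R`. -/
noncomputable def wzCertificate (n k : ℕ) : ℝ :=
  ((n + 1) ^ 2 * (21 * n + 13) + 4 * (n + 1) * (7 * n + 5) * k + (13 * n + 11) * k ^ 2 +
    2 * k ^ 3) / (2 * (2 * n + 1) * (2 * n + k + 2) ^ 2)

/-- The logarithmic derivative `h(n, k)` of `wzKernel` at `ε = 0` along the deformation which
replaces the factors `j²` of `n!²`, `(n + k)!²`, `(2n + k + 1)!²` by `j² - 11 ε / 8`,
`j² - 3 ε / 8`, `j² - ε`. -/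
noncomputable def wzWeight (n k : ℕ) : ℝ :=
  H 2 (2 * n + k + 1) - 3 / 8 * H 2 (n + k) - 11 / 4 * H 2 n

/-- The derivative at `ε = 0` of the certificate along the deformation of `wzWeight`. The first
summand comes from the denominator, where `(2n + k + 2)²` becomes `(2n + k + 2)² - ε`, and the
second from the numerator. -/
noncomputable def wzCertificateDeriv (n k : ℕ) : ℝ :=
  wzCertificate n k / (2 * n + k + 2) ^ 2 +
    (5 * k ^ 2 + 4 * (n + 1) * k - 2 * (n + 1) * (21 * n + 13)) /
      (16 * (2 * n + 1) * (n + 1) * (2 * n + k + 2) ^ 2)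

/-- The first order part `F h` of the deformed WZ kernel. -/
noncomputable def weightedKernel (n k : ℕ) : ℝ := wzKernel n k * wzWeight n k

/-- The first order part of the deformed WZ mate `F R`. -/
noncomputable def weightedMate (n k : ℕ) : ℝ :=
  wzKernel n k * (wzCertificate n k * wzWeight n k + wzCertificateDeriv n k)

theorem wzKernel_succ_right (n k : ℕ) :
    wzKernel n (k + 1) = wzKernel n k * (((n : ℝ) + k + 1) / (2 * n + k + 2)) ^ 2 := by
  have h_choose : ((2 * n + k + 1).choose n : ℝ) * (2 * n + k + 2) =
      (2 * n + (k + 1) + 1).choose n * (n + k + 2) := by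
    have h := Nat.choose_mul_succ_eq (2 * n + k + 1) n
    rw [show 2 * n + k + 1 + 1 - n = n + k + 2 by omega] at h
    exact_mod_cast h
  have h_pos : (0 : ℝ) < (2 * n + k + 1).choose n := by
    exact_mod_cast Nat.choose_pos (by omega)
  rw [wzKernel, wzKernel, Nat.cast_add_one, show (n : ℝ) + (k + 1) + 1 = n + k + 2 by ring,
    mul_comm ((n : ℝ) + k + 2), ← h_choose]
  have := n.centralBinom_pos
  field

theorem wzKernel_succ_left (n k : ℕ) :
    wzKernel (n + 1) k = wzKernel n (k + 1) *
      (((n : ℝ) + 1) ^ 3 / (2 * (2 * n + 1) * (2 * n + k + 3) ^ 2)) := by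
  have h_choose : (2 * (n : ℝ) + k + 3) * (2 * n + (k + 1) + 1).choose n =
      (2 * (n + 1) + k + 1).choose (n + 1) * (n + 1) := by
    have h := Nat.add_one_mul_choose_eq (2 * n + (k + 1) + 1) n
    rw [show 2 * n + (k + 1) + 1 + 1 = 2 * (n + 1) + k + 1 by ring] at h
    rw [show 2 * (n : ℝ) + k + 3 = 2 * (n + 1) + k + 1 by ring]
    exact_mod_cast h
  have h_central : ((n : ℝ) + 1) * (n + 1).centralBinom = 2 * (2 * n + 1) * n.centralBinom := by
    exact_mod_cast n.succ_mul_centralBinom_succ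
  have h_choose_eq := (eq_div_iff (by positivity)).mpr h_choose.symm
  have h_central_eq := (eq_div_iff (by positivity)).mpr ((mul_comm _ _).trans h_central)
  have h_pos : (0 : ℝ) < (2 * n + (k + 1) + 1).choose n := by
    exact_mod_cast Nat.choose_pos (by omega)
  have := n.centralBinom_pos
  rw [wzKernel, wzKernel, h_choose_eq, h_central_eq]
  push_cast
  field

theorem wzKernel_pos (n k : ℕ) : 0 < wzKernel n k := by
  have h_choose : 0 < (2 * n + k + 1).choose n := Nat.choose_pos (by omega)
  have := n.centralBinom_pos
  unfold wzKernel
  positivity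

theorem wzKernel_le (n k : ℕ) : wzKernel n k ≤ 1 / (((n : ℝ) + 1) * (k + 1) ^ 2) := by
  have h_central : (n : ℝ) + 1 ≤ n.centralBinom := by
    exact_mod_cast Nat.le_of_dvd n.centralBinom_pos n.succ_dvd_centralBinom
  have h_choose : (1 : ℝ) ≤ (2 * n + k + 1).choose n := by
    exact_mod_cast Nat.choose_pos (by omega)
  have h_factor : (k : ℝ) + 1 ≤ (n + k + 1) * (2 * n + k + 1).choose n := by
    nlinarith [Nat.cast_nonneg (α := ℝ) n, Nat.cast_nonneg (α := ℝ) k]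
  unfold wzKernel
  gcongr

theorem wzKernel_zero_left (k : ℕ) : wzKernel 0 k = 1 / ((k : ℝ) + 1) ^ 2 := by
  simp [wzKernel]

theorem wzKernel_zero_right (n : ℕ) :
    wzKernel n 0 = 8 * (2 * n + 1) / (((n : ℝ) + 1) ^ 3 * (n + 1).centralBinom ^ 3) := by
  have h_choose : 2 * ((2 * n + 1).choose n : ℝ) = (n + 1).centralBinom := by
    have h := Nat.add_one_mul_choose_eq (2 * n + 1) n
    rw [show 2 * n + 1 + 1 = 2 * (n + 1) by ring, ← Nat.centralBinom_eq_two_mul_choose] at h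
    have h_real : 2 * ((n : ℝ) + 1) * (2 * n + 1).choose n =
        (n + 1).centralBinom * (n + 1) := by exact_mod_cast h
    exact mul_right_cancel₀ n.cast_add_one_ne_zero (by linear_combination h_real)
  have h_central : ((n : ℝ) + 1) * (n + 1).centralBinom = 2 * (2 * n + 1) * n.centralBinom := by
    exact_mod_cast n.succ_mul_centralBinom_succ
  have := n.centralBinom_pos
  have := (n + 1).centralBinom_pos
  rw [wzKernel, Nat.cast_zero, add_zero, add_zero,
    show ((2 * n + 1).choose n : ℝ) = (n + 1).centralBinom / 2 by linear_combination h_choose / 2,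
    div_eq_div_iff (by positivity) (by positivity)]
  linear_combination ((n : ℝ) + 1) ^ 2 * (n + 1).centralBinom ^ 2 * h_central

theorem wzKernel_sub_succ_left (n k : ℕ) :
    wzKernel n k - wzKernel (n + 1) k =
      wzKernel n k * wzCertificate n k - wzKernel n (k + 1) * wzCertificate n (k + 1) := by
  rw [wzKernel_succ_left, wzKernel_succ_right, wzCertificate, wzCertificate]
  push_cast
  rw [show 2 * (n : ℝ) + (k + 1) + 2 = 2 * n + k + 3 by ring]
  field

end Kernel

section Weight

theorem wzWeight_succ_right (n k : ℕ) :
    wzWeight n (k + 1) =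
      wzWeight n k + (1 / (2 * n + k + 2) ^ 2 - 3 / 8 * (1 / ((n : ℝ) + k + 1) ^ 2)) := by
  rw [wzWeight, wzWeight, ← add_assoc, ← add_assoc, H_succ 2 (n + k), H_succ 2 (2 * n + k + 1)]
  push_cast
  ring

theorem wzWeight_succ_left (n k : ℕ) :
    wzWeight (n + 1) k =
      wzWeight n (k + 1) + (1 / (2 * n + k + 3) ^ 2 - 11 / 4 * (1 / ((n : ℝ) + 1) ^ 2)) := by
  rw [wzWeight, wzWeight, show 2 * (n + 1) + k + 1 = 2 * n + (k + 1) + 1 + 1 by ring,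
    show n + 1 + k = n + (k + 1) by ring, H_succ 2 (2 * n + (k + 1) + 1), H_succ 2 n]
  push_cast
  ring

theorem abs_wzWeight_le (n k : ℕ) : |wzWeight n k| ≤ 8 := by
  unfold wzWeight
  rw [abs_le]
  constructor <;>
    linarith [H_nonneg 2 (2 * n + k + 1), H_nonneg 2 (n + k), H_nonneg 2 n,
      H_two_le_two (2 * n + k + 1), H_two_le_two (n + k), H_two_le_two n]

theorem wzKernel_mul_wzWeight_sub (n k : ℕ) :
    wzKernel (n + 1) k * (wzWeight n k - wzWeight (n + 1) k) =
      wzKernel n k * wzCertificateDeriv n k - wzKernel n (k + 1) *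
        (wzCertificate n (k + 1) * (wzWeight n (k + 1) - wzWeight n k) +
          wzCertificateDeriv n (k + 1)) := by
  rw [wzKernel_succ_left, wzKernel_succ_right, wzWeight_succ_left, wzWeight_succ_right,
    wzCertificateDeriv, wzCertificateDeriv, wzCertificate, wzCertificate]
  push_cast
  rw [show 2 * (n : ℝ) + (k + 1) + 2 = 2 * n + k + 3 by ring]
  field

theorem weightedKernel_sub_succ_left (n k : ℕ) :
    weightedKernel n k - weightedKernel (n + 1) k =
      weightedMate n k - weightedMate n (k + 1) := by
  unfold weightedKernel weightedMate
  linear_combination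
    wzWeight n k * wzKernel_sub_succ_left n k + wzKernel_mul_wzWeight_sub n k

end Weight

section Bounds

theorem abs_weightedKernel_le (n k : ℕ) :
    |weightedKernel n k| ≤ 8 / ((n : ℝ) + 1) * (1 / ((k : ℝ) + 1) ^ 2) :=
  calc |weightedKernel n k| = wzKernel n k * |wzWeight n k| := by
        rw [weightedKernel, abs_mul, abs_of_pos (wzKernel_pos n k)]
    _ ≤ 1 / (((n : ℝ) + 1) * (k + 1) ^ 2) * 8 := by
        gcongr
        exacts [wzKernel_le n k, abs_wzWeight_le n k]
    _ = 8 / ((n : ℝ) + 1) * (1 / ((k : ℝ) + 1) ^ 2) := by field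

theorem abs_sum_weightedKernel_le (n K : ℕ) :
    |∑ k ∈ Finset.range K, weightedKernel n k| ≤ 16 * (1 / ((n : ℝ) + 1)) :=
  calc |∑ k ∈ Finset.range K, weightedKernel n k|
      ≤ ∑ k ∈ Finset.range K, 8 / ((n : ℝ) + 1) * (1 / ((k : ℝ) + 1) ^ 2) :=
        (Finset.abs_sum_le_sum_abs _ _).trans
          (Finset.sum_le_sum fun k _ => abs_weightedKernel_le n k)
    _ = 8 / ((n : ℝ) + 1) * H 2 K := by rw [← Finset.mul_sum, H]
    _ ≤ 8 / ((n : ℝ) + 1) * 2 := by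
        gcongr
        exact H_two_le_two K
    _ = 16 * (1 / ((n : ℝ) + 1)) := by ring

theorem wzCertificate_nonneg (n k : ℕ) : 0 ≤ wzCertificate n k := by
  unfold wzCertificate
  positivity

theorem wzCertificate_le (n k : ℕ) : wzCertificate n k ≤ 3 * ((n : ℝ) + k + 1) := by
  unfold wzCertificate
  rw [div_le_iff₀ (by positivity), ← sub_nonneg]
  ring_nf
  positivity

theorem abs_wzCertificateDeriv_le (n k : ℕ) :
    |wzCertificateDeriv n k| ≤ 4 * ((n : ℝ) + k + 1) := by
  have h_main : |wzCertificate n k / (2 * n + k + 2) ^ 2| ≤ 3 * ((n : ℝ) + k + 1) := by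
    have h_nonneg := wzCertificate_nonneg n k
    have h_one_le : (1 : ℝ) ≤ (2 * n + k + 2) ^ 2 := by
      exact_mod_cast Nat.one_le_pow 2 (2 * n + k + 2) (by omega)
    rw [abs_of_nonneg (by positivity)]
    exact (div_le_self h_nonneg h_one_le).trans (wzCertificate_le n k)
  have h_rest : |(5 * (k : ℝ) ^ 2 + 4 * (n + 1) * k - 2 * (n + 1) * (21 * n + 13)) /
      (16 * (2 * n + 1) * (n + 1) * (2 * n + k + 2) ^ 2)| ≤ 1 := by
    rw [abs_div, abs_of_pos (by positivity : (0 : ℝ) < 16 * (2 * n + 1) * (n + 1) *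
      (2 * n + k + 2) ^ 2), div_le_one (by positivity), abs_le]
    constructor <;> rw [← sub_nonneg] <;> ring_nf <;> positivity
  exact (abs_add_le _ _).trans
    (by linarith [n.cast_nonneg (α := ℝ), k.cast_nonneg (α := ℝ)])

theorem abs_weightedMate_le (n k : ℕ) : |weightedMate n k| ≤ 28 * (1 / ((k : ℝ) + 1)) := by
  have h_product : |wzCertificate n k * wzWeight n k| ≤ 3 * ((n : ℝ) + k + 1) * 8 := by
    rw [abs_mul, abs_of_nonneg (wzCertificate_nonneg n k)]
    gcongr
    exacts [wzCertificate_le n k, abs_wzWeight_le n k]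
  have h_factor : |wzCertificate n k * wzWeight n k + wzCertificateDeriv n k| ≤
      28 * (((n : ℝ) + 1) * (k + 1)) := by
    have h_nk : (0 : ℝ) ≤ n * k := by positivity
    linarith [abs_add_le (wzCertificate n k * wzWeight n k) (wzCertificateDeriv n k),
      abs_wzCertificateDeriv_le n k]
  calc |weightedMate n k|
      = wzKernel n k * |wzCertificate n k * wzWeight n k + wzCertificateDeriv n k| := by
        rw [weightedMate, abs_mul, abs_of_pos (wzKernel_pos n k)]
    _ ≤ 1 / (((n : ℝ) + 1) * (k + 1) ^ 2) * (28 * (((n : ℝ) + 1) * (k + 1))) := by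
        gcongr
        exact wzKernel_le n k
    _ = 28 * (1 / ((k : ℝ) + 1)) := by field

theorem tendsto_weightedMate (n : ℕ) : Tendsto (weightedMate n) atTop (𝓝 0) :=
  squeeze_zero_norm (abs_weightedMate_le n) <| by
    simpa only [mul_zero] using (tendsto_one_div_add_atTop_nhds_zero_nat (𝕜 := ℝ)).const_mul 28

end Bounds

section Boundary

theorem weightedMate_zero_right (n : ℕ) :
    weightedMate n 0 =
      (21 * ((n : ℝ) + 1) - 8) / (((n : ℝ) + 1) ^ 3 * ((2 * (n + 1)).choose (n + 1) : ℝ) ^ 3) *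
        (H 2 (2 * n + 1) - 25 / 8 * H 2 n) := by
  have h_certificate : wzCertificate n 0 = (21 * n + 13) / (8 * (2 * n + 1)) := by
    rw [wzCertificate, Nat.cast_zero]
    field
  have h_deriv : wzCertificateDeriv n 0 = 0 := by
    rw [wzCertificateDeriv, h_certificate, Nat.cast_zero]
    field
  have h_weight : wzWeight n 0 = H 2 (2 * n + 1) - 25 / 8 * H 2 n := by
    rw [wzWeight, add_zero, add_zero]
    ring
  have := (n + 1).centralBinom_pos
  rw [weightedMate, h_deriv, h_weight, h_certificate, wzKernel_zero_right,
    ← Nat.centralBinom_eq_two_mul_choose]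
  field

theorem weightedKernel_zero_left (k : ℕ) :
    weightedKernel 0 k =
      5 / 8 * (H 2 k / ((k : ℝ) + 1) ^ 2) + 1 / ((k : ℝ) + 1) ^ 4 := by
  rw [weightedKernel, wzKernel_zero_left, wzWeight, mul_zero, zero_add, H_succ, H_zero]
  field

theorem sum_range_weightedKernel_zero_left (K : ℕ) :
    ∑ k ∈ Finset.range K, weightedKernel 0 k = 5 / 16 * H 2 K ^ 2 + 11 / 16 * H 4 K := by
  simp only [weightedKernel_zero_left, Finset.sum_add_distrib]
  rw [← Finset.mul_sum, sum_range_H_div_pow, ← H]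
  ring

theorem tendsto_sum_weightedKernel_zero_left :
    Tendsto (fun K => ∑ k ∈ Finset.range K, weightedKernel 0 k) atTop
      (𝓝 (47 * Real.pi ^ 4 / 2880)) := by
  have h_two := tendsto_H_of_hasSum hasSum_zeta_two
  have h_four := tendsto_H_of_hasSum hasSum_zeta_four
  simp only [sum_range_weightedKernel_zero_left]
  convert ((h_two.pow 2).const_mul (5 / 16)).add (h_four.const_mul (11 / 16)) using 2
  ring

end Boundary

theorem stmt_2 :
    Tendsto (fun N => ∑ n ∈ Finset.range N,
      (21 * ((n:ℝ)+1) - 8) / (((n:ℝ)+1)^3 * ((2*(n+1)).choose (n+1) : ℝ)^3) *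
        (H 2 (2*n+1) - 25/8 * H 2 n))
      atTop (𝓝 (47 * Real.pi^4 / 2880)) := by
  simp only [← weightedMate_zero_right]
  refine tendsto_sum_range_of_wz weightedKernel_sub_succ_left
    tendsto_sum_weightedKernel_zero_left tendsto_weightedMate abs_sum_weightedKernel_le ?_
  simpa only [mul_zero] using (tendsto_one_div_add_atTop_nhds_zero_nat (𝕜 := ℝ)).const_mul 16
end

section
/- $\sum_{n\geq 0} \frac{\binom{2n}{n}}{(2n+1)^2 (-16)^n}\left(5 \sum_{j=0}^{n} \frac{1}{(2j+1)^3} + \frac{1}{(2n+1)^3}\right) = \frac{\pi^2}{2}\,\zeta(3)$. -/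
open Filter Topology

/-- The Riemann zeta value `ζ(s) = ∑_{n ≥ 1} 1/n^s`. -/
noncomputable def zeta (s : ℕ) : ℝ := ∑' n : ℕ, 1 / ((n:ℝ) + 1) ^ s

/-!
The proof is a Wilf–Zeilberger argument. With `w n = (2n choose n) / (-16)^n`, `m = n + 1/2` and
`b = B(m, k + 1)` there are functions `F` and `G` of the shape `w n * b ^ 4 * (⋯)` such that
`F (n + 1) k - F n k = G n (k + 1) - G n k`. Since `F` vanishes at `n = 0` and as `n → ∞`, the sum
`∑ₙ G n k` does not depend on `k`. At `k = 0` it is `16` times the series in question. As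
`k → ∞`, the quantity `b ^ 2 * (m + k)` tends to `0` for `n ≠ 0` and, by Wallis' product, to `π`
for `n = 0`, so that only the term `n = 0` survives, with limit `8 * π ^ 2 * ζ(3)`.
-/

section WilfZeilberger

variable {E : Type*} [NormedAddCommGroup E] {F G : ℕ → ℕ → E}

theorem tsum_wz_succ (hwz : ∀ n k, F (n + 1) k - F n k = G n (k + 1) - G n k)
    (hF : ∀ k, Tendsto (F · k) atTop (𝓝 (F 0 k))) (hG : ∀ k, Summable (G · k)) (k : ℕ) :
    ∑' n, G n (k + 1) = ∑' n, G n k := by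
  have hdiff := ((hG (k + 1)).hasSum.sub (hG k).hasSum).tendsto_sum_nat
  have htelescope (N : ℕ) : ∑ n ∈ Finset.range N, (G n (k + 1) - G n k) = F N k - F 0 k := by
    simp only [← hwz, Finset.sum_range_sub (F · k)]
  simp only [htelescope] at hdiff
  exact sub_eq_zero.1 (tendsto_nhds_unique hdiff (by simpa using (hF k).sub_const (F 0 k)))

theorem hasSum_wz [CompleteSpace E] {g : ℕ → E} {bound : ℕ → ℝ}
    (hwz : ∀ n k, F (n + 1) k - F n k = G n (k + 1) - G n k)
    (hF : ∀ k, Tendsto (F · k) atTop (𝓝 (F 0 k))) (hbound : Summable bound)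
    (hG : ∀ n k, ‖G n k‖ ≤ bound n) (hlim : ∀ n, Tendsto (G n) atTop (𝓝 (g n))) :
    HasSum (G · 0) (∑' n, g n) := by
  have hsummable (k : ℕ) : Summable (G · k) := hbound.of_norm_bounded fun n => hG n k
  have hconst (k : ℕ) : ∑' n, G n k = ∑' n, G n 0 := by
    induction k with
    | zero => rfl
    | succ k ih => rw [tsum_wz_succ hwz hF hsummable, ih]
  have htsum := tendsto_tsum_of_dominated_convergence hbound hlim
    (Eventually.of_forall fun k n => hG n k)
  simp only [hconst] at htsum
  exact tendsto_nhds_unique tendsto_const_nhds htsum ▸ (hsummable 0).hasSum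

end WilfZeilberger

theorem tendsto_const_div_add_natCast (a c : ℝ) :
    Tendsto (fun k : ℕ => a / (c + k)) atTop (𝓝 0) :=
  (tendsto_atTop_add_const_left _ c tendsto_natCast_atTop_atTop).const_div_atTop a

section Beta

open ProbabilityTheory (beta)

variable {α β : ℝ}

theorem beta_comm (α β : ℝ) : beta α β = beta β α := by
  rw [beta, beta, mul_comm, add_comm]

theorem beta_add_one_left (hα : α ≠ 0) (hαβ : α + β ≠ 0) :
    beta (α + 1) β = beta α β * (α / (α + β)) := by
  rw [beta, beta, add_right_comm, Real.Gamma_add_one hα, Real.Gamma_add_one hαβ, div_mul_div_comm]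
  ring

theorem beta_add_one_right (hβ : β ≠ 0) (hαβ : α + β ≠ 0) :
    beta α (β + 1) = beta α β * (β / (α + β)) := by
  rw [beta_comm, beta_add_one_left hβ (by rwa [add_comm]), beta_comm, add_comm]

theorem beta_one_right (hα : 0 < α) : beta α 1 = 1 / α := by
  have := (Real.Gamma_pos_of_pos hα).ne'
  rw [beta, Real.Gamma_one, Real.Gamma_add_one hα.ne']
  field_simp

/-- The value `B(n + 1/2, k + 1)` of the Beta function. -/
noncomputable def halfBeta (n k : ℕ) : ℝ := beta ((n : ℝ) + 1 / 2) ((k : ℝ) + 1)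

theorem halfBeta_succ_left (n k : ℕ) :
    halfBeta (n + 1) k = halfBeta n k * (((n : ℝ) + 1 / 2) / ((n : ℝ) + 1 / 2 + k + 1)) := by
  rw [halfBeta, halfBeta, Nat.cast_succ, add_right_comm, beta_add_one_left (by positivity)
    (by positivity), add_assoc _ (k : ℝ)]

theorem halfBeta_succ_right (n k : ℕ) :
    halfBeta n (k + 1) = halfBeta n k * (((k : ℝ) + 1) / ((n : ℝ) + 1 / 2 + k + 1)) := by
  rw [halfBeta, halfBeta, Nat.cast_succ, beta_add_one_right (by positivity) (by positivity),
    add_assoc _ (k : ℝ)]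

theorem halfBeta_zero_right (n : ℕ) : halfBeta n 0 = 1 / ((n : ℝ) + 1 / 2) := by
  rw [halfBeta, Nat.cast_zero, zero_add, beta_one_right (by positivity)]

theorem halfBeta_zero_left_sq_mul (k : ℕ) :
    halfBeta 0 k ^ 2 * (1 / 2 + k) = 2 * Real.Wallis.W k := by
  induction k with
  | zero => norm_num [halfBeta_zero_right, Real.Wallis.W]
  | succ k ih =>
    rw [Real.Wallis.W_succ, ← mul_assoc, ← ih, halfBeta_succ_right]
    push_cast
    field_simp
    ring

theorem halfBeta_succ_left_sq_mul (n k : ℕ) :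
    halfBeta (n + 1) k ^ 2 * ((n + 1 : ℕ) + 1 / 2 + k) =
      halfBeta n k ^ 2 * (n + 1 / 2 + k) *
        (((n : ℝ) + 1 / 2) / (n + 1 / 2 + k) * ((n + 1 / 2) / (n + 1 / 2 + k + 1))) := by
  rw [halfBeta_succ_left]
  push_cast
  field_simp
  ring

theorem halfBeta_sq_mul_le_pi (n k : ℕ) : halfBeta n k ^ 2 * (n + 1 / 2 + k) ≤ Real.pi := by
  induction n with
  | zero =>
    rw [Nat.cast_zero, zero_add, halfBeta_zero_left_sq_mul]
    exact (le_div_iff₀' two_pos).1 (Real.Wallis.W_le k)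
  | succ n ih =>
    rw [halfBeta_succ_left_sq_mul]
    refine (mul_le_of_le_one_right (by positivity) ?_).trans ih
    refine mul_le_one₀ ?_ (by positivity) ?_ <;> refine div_le_one_of_le₀ ?_ (by positivity)
    · exact le_add_of_nonneg_right k.cast_nonneg
    · rw [add_assoc _ (k : ℝ)]
      exact le_add_of_nonneg_right (by positivity)

theorem tendsto_halfBeta_zero_left_sq_mul :
    Tendsto (fun k : ℕ => halfBeta 0 k ^ 2 * ((0 : ℕ) + 1 / 2 + k)) atTop (𝓝 Real.pi) := by
  simp only [Nat.cast_zero, zero_add, halfBeta_zero_left_sq_mul]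
  simpa [mul_div_cancel₀] using Real.Wallis.tendsto_W_nhds_pi_div_two.const_mul 2

theorem tendsto_halfBeta_succ_left_sq_mul (n : ℕ) :
    Tendsto (fun k : ℕ => halfBeta (n + 1) k ^ 2 * ((n + 1 : ℕ) + 1 / 2 + k)) atTop (𝓝 0) := by
  have hratio : Tendsto (fun k : ℕ => ((n : ℝ) + 1 / 2) / (n + 1 / 2 + k) *
      ((n + 1 / 2) / (n + 1 / 2 + k + 1))) atTop (𝓝 0) := by
    simpa [add_right_comm] using (tendsto_const_div_add_natCast (n + 1 / 2) (n + 1 / 2)).mul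
      (tendsto_const_div_add_natCast (n + 1 / 2) (n + 1 / 2 + 1))
  have hbound := hratio.const_mul Real.pi
  rw [mul_zero] at hbound
  refine squeeze_zero (fun k => by positivity) (fun k => ?_) hbound
  rw [halfBeta_succ_left_sq_mul]
  exact mul_le_mul_of_nonneg_right (halfBeta_sq_mul_le_pi n k) (by positivity)

end Beta

section Zeta

variable {s : ℕ}

theorem hasSum_zeta (hs : 1 < s) : HasSum (fun n : ℕ => 1 / ((n : ℝ) + 1) ^ s) (zeta s) := by
  have := (summable_nat_add_iff 1).2 (Real.summable_one_div_nat_pow.2 hs)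
  exact Summable.hasSum (by simpa using this)

theorem hasSum_one_div_add_half_pow (hs : 1 < s) :
    HasSum (fun n : ℕ => 1 / ((n : ℝ) + 1 / 2) ^ s) ((2 ^ s - 1) * zeta s) := by
  have hodd : Summable fun n : ℕ => 1 / (((2 * n : ℕ) : ℝ) + 1) ^ s :=
    (hasSum_zeta hs).summable.comp_injective (mul_right_injective₀ two_ne_zero)
  have hodd_term (n : ℕ) :
      1 / ((n : ℝ) + 1 / 2) ^ s = 2 ^ s * (1 / (((2 * n : ℕ) : ℝ) + 1) ^ s) := by
    rw [Nat.cast_mul, Nat.cast_two, show 2 * (n : ℝ) + 1 = 2 * (n + 1 / 2) by ring, mul_pow]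
    field_simp
  have heven_term (n : ℕ) :
      1 / (((2 * n + 1 : ℕ) : ℝ) + 1) ^ s = 1 / 2 ^ s * (1 / ((n : ℝ) + 1) ^ s) := by
    rw [one_div_mul_one_div, ← mul_pow]
    push_cast
    ring
  have heven : HasSum (fun n : ℕ => 1 / (((2 * n + 1 : ℕ) : ℝ) + 1) ^ s) (1 / 2 ^ s * zeta s) := by
    simpa only [heven_term] using (hasSum_zeta hs).mul_left (1 / 2 ^ s)
  have hsplit : ∑' n : ℕ, 1 / (((2 * n : ℕ) : ℝ) + 1) ^ s = zeta s - 1 / 2 ^ s * zeta s :=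
    eq_sub_of_add_eq <| (HasSum.even_add_odd (f := fun n : ℕ => 1 / ((n : ℝ) + 1) ^ s)
      hodd.hasSum heven).unique (hasSum_zeta hs)
  have hvalue : (2 ^ s - 1) * zeta s = 2 ^ s * (zeta s - 1 / 2 ^ s * zeta s) := by
    field_simp
  simpa only [hodd_term, hvalue, hsplit] using hodd.hasSum.mul_left (2 ^ s)

/-- The partial sum `∑_{j < k} (j + 1)⁻ˢ + ∑_{j ≤ n + k} (j + 1/2)⁻ˢ`, which tends to `2ˢ ζ(s)` as
`k → ∞`. -/
noncomputable def interlacedSum (s n k : ℕ) : ℝ :=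
  (∑ j ∈ Finset.range k, 1 / ((j : ℝ) + 1) ^ s) +
    ∑ j ∈ Finset.range (n + k + 1), 1 / ((j : ℝ) + 1 / 2) ^ s

theorem interlacedSum_succ_left (s n k : ℕ) :
    interlacedSum s (n + 1) k = interlacedSum s n k + 1 / ((n : ℝ) + 1 / 2 + k + 1) ^ s := by
  rw [interlacedSum, interlacedSum, add_right_comm n 1, Finset.sum_range_succ _ (n + k + 1),
    add_assoc]
  push_cast
  ring_nf

theorem interlacedSum_succ_right (s n k : ℕ) :
    interlacedSum s n (k + 1) =
      interlacedSum s n k + 1 / ((k : ℝ) + 1) ^ s + 1 / ((n : ℝ) + 1 / 2 + k + 1) ^ s := by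
  rw [interlacedSum, interlacedSum, ← add_assoc n k, Finset.sum_range_succ _ (n + k + 1),
    Finset.sum_range_succ _ k]
  push_cast
  ring_nf

theorem interlacedSum_zero_right (s n : ℕ) :
    interlacedSum s n 0 = 2 ^ s * ∑ j ∈ Finset.range (n + 1), 1 / (2 * (j : ℝ) + 1) ^ s := by
  rw [interlacedSum, Finset.range_zero, Finset.sum_empty, zero_add, add_zero, Finset.mul_sum]
  refine Finset.sum_congr rfl fun j _ => ?_
  rw [show (2 * (j : ℝ) + 1) = 2 * (j + 1 / 2) by ring, mul_pow]
  field_simp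

theorem interlacedSum_nonneg (s n k : ℕ) : 0 ≤ interlacedSum s n k := by
  unfold interlacedSum
  positivity

theorem interlacedSum_le (hs : 1 < s) (n k : ℕ) : interlacedSum s n k ≤ 2 ^ s * zeta s :=
  calc interlacedSum s n k ≤ zeta s + (2 ^ s - 1) * zeta s :=
        add_le_add (sum_le_hasSum _ (fun _ _ => by positivity) (hasSum_zeta hs))
          (sum_le_hasSum _ (fun _ _ => by positivity) (hasSum_one_div_add_half_pow hs))
    _ = 2 ^ s * zeta s := by ring

theorem tendsto_interlacedSum (hs : 1 < s) (n : ℕ) :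
    Tendsto (interlacedSum s n) atTop (𝓝 (2 ^ s * zeta s)) := by
  have hindex : Tendsto (fun k => n + k + 1) atTop atTop :=
    tendsto_atTop_mono (fun k => show k ≤ n + k + 1 by omega) tendsto_id
  have := (hasSum_zeta hs).tendsto_sum_nat.add
    ((hasSum_one_div_add_half_pow hs).tendsto_sum_nat.comp hindex)
  rwa [show zeta s + (2 ^ s - 1) * zeta s = 2 ^ s * zeta s by ring] at this

end Zeta

section Pair

/-- The coefficient `(2n choose n) / (-16)ⁿ` of the series. -/
noncomputable def weight (n : ℕ) : ℝ := n.centralBinom / (-16) ^ n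

/-- The component of the Wilf–Zeilberger pair that is differenced in `n`. -/
noncomputable def wzF (n k : ℕ) : ℝ :=
  2 * n * (2 * k + n + 3 / 2) * weight n * halfBeta n k ^ 4 * interlacedSum 3 n k

/-- The component of the Wilf–Zeilberger pair that is differenced in `k`; its values at `k = 0` are
`16` times the terms of the series. It is written in terms of `m = n + 1/2` and of
`x = m / (m + k)`, which lies in `(0, 1]` and tends to `0` as `k → ∞`. -/
noncomputable def wzG (n k : ℕ) : ℝ :=
  let m : ℝ := n + 1 / 2
  let x : ℝ := m / (m + k)
  weight n * (halfBeta n k ^ 2 * (m + k)) ^ 2 *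
    ((1 + x + x ^ 2 / 2) * interlacedSum 3 n k + x ^ 2 / (2 * m ^ 3))

theorem weight_succ (n : ℕ) :
    weight (n + 1) = -weight n * (((n : ℝ) + 1 / 2) / (4 * (n + 1))) := by
  have hrec : ((n : ℝ) + 1) * (n + 1).centralBinom = 2 * (2 * n + 1) * n.centralBinom := by
    exact_mod_cast n.succ_mul_centralBinom_succ
  rw [weight, weight, pow_succ, eq_div_of_mul_eq (by positivity) ((mul_comm _ _).trans hrec)]
  field_simp
  ring

theorem abs_weight_le (n : ℕ) : |weight n| ≤ (1 / 4) ^ n := by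
  have hbinom : (n.centralBinom : ℝ) ≤ 4 ^ n := mod_cast n.centralBinom_le_four_pow
  calc |weight n| = n.centralBinom / 16 ^ n := by simp [weight, abs_div]
    _ ≤ 4 ^ n / 16 ^ n := by gcongr
    _ = (1 / 4) ^ n := by rw [← div_pow]; norm_num

theorem wzF_succ_sub (n k : ℕ) : wzF (n + 1) k - wzF n k = wzG n (k + 1) - wzG n k := by
  simp only [wzF, wzG, interlacedSum_succ_left, interlacedSum_succ_right, weight_succ,
    halfBeta_succ_left, halfBeta_succ_right]
  -- Both sides are now `weight n * halfBeta n k ^ 4` times a function that is rational in `n`, `k`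
  -- and affine in `interlacedSum 3 n k`.
  push_cast
  field_simp
  ring

theorem wzG_zero_right (n : ℕ) :
    wzG n 0 = 16 * (((2 * n).choose n : ℝ) / ((2 * (n : ℝ) + 1) ^ 2 * (-16) ^ n) *
      (5 * (∑ j ∈ Finset.range (n + 1), 1 / (2 * (j : ℝ) + 1) ^ 3) +
        1 / (2 * (n : ℝ) + 1) ^ 3)) := by
  have hm : (n : ℝ) + 1 / 2 = (2 * n + 1) / 2 := by ring
  simp only [wzG, weight, halfBeta_zero_right, interlacedSum_zero_right, Nat.cast_zero, add_zero,
    Nat.centralBinom_eq_two_mul_choose, hm]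
  field_simp
  ring

theorem abs_weight_mul_halfBeta_sq_mul_sq_le (n k : ℕ) :
    |weight n * (halfBeta n k ^ 2 * (n + 1 / 2 + k)) ^ 2| ≤ (1 / 4) ^ n * Real.pi ^ 2 := by
  rw [abs_mul, abs_sq]
  gcongr
  · exact abs_weight_le n
  · exact halfBeta_sq_mul_le_pi n k

theorem abs_wzF_le (n k : ℕ) :
    |wzF n k| ≤ (1 / 4) ^ n * Real.pi ^ 2 * (6 * (2 ^ 3 * zeta 3)) := by
  have hfactor : wzF n k = weight n * (halfBeta n k ^ 2 * (n + 1 / 2 + k)) ^ 2 *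
      (2 * n * (2 * k + n + 3 / 2) / (n + 1 / 2 + k) ^ 2 * interlacedSum 3 n k) := by
    rw [wzF]
    field_simp
  have hrational : 2 * (n : ℝ) * (2 * k + n + 3 / 2) / (n + 1 / 2 + k) ^ 2 ≤ 6 := by
    rw [div_le_iff₀ (by positivity)]
    nlinarith [mul_nonneg (Nat.cast_nonneg (α := ℝ) n) (Nat.cast_nonneg (α := ℝ) k)]
  have hsum := interlacedSum_nonneg 3 n k
  rw [hfactor, abs_mul]
  gcongr
  · exact abs_weight_mul_halfBeta_sq_mul_sq_le n k
  · rw [abs_of_nonneg (by positivity)]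
    gcongr
    exact interlacedSum_le (by norm_num) n k

theorem abs_wzG_le (n k : ℕ) :
    |wzG n k| ≤ (1 / 4) ^ n * Real.pi ^ 2 * (5 / 2 * (2 ^ 3 * zeta 3) + 4) := by
  have hsum := interlacedSum_nonneg 3 n k
  simp only [wzG]
  set m : ℝ := n + 1 / 2
  set x : ℝ := m / (m + k)
  have hm_ge : 1 / 2 ≤ m := le_add_of_nonneg_left n.cast_nonneg
  have hx_nonneg : 0 ≤ x := by positivity
  have hx_le_one : x ≤ 1 :=
    div_le_one_of_le₀ (le_add_of_nonneg_right k.cast_nonneg) (by positivity)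
  rw [abs_mul]
  gcongr
  · exact abs_weight_mul_halfBeta_sq_mul_sq_le n k
  rw [abs_of_nonneg (by positivity)]
  have hx_sq_le_one : x ^ 2 ≤ 1 := pow_le_one₀ hx_nonneg hx_le_one
  gcongr
  · linarith
  · exact interlacedSum_le (by norm_num) n k
  · calc x ^ 2 / (2 * m ^ 3) ≤ 1 / (2 * (1 / 2) ^ 3) := by gcongr
      _ = 4 := by norm_num

theorem tendsto_wzF (k : ℕ) : Tendsto (wzF · k) atTop (𝓝 (wzF 0 k)) := by
  have hzero : wzF 0 k = 0 := by simp [wzF]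
  have hgeom : Tendsto (fun n : ℕ => (1 / 4 : ℝ) ^ n) atTop (𝓝 0) :=
    tendsto_pow_atTop_nhds_zero_of_lt_one (by norm_num) (by norm_num)
  rw [hzero]
  refine squeeze_zero_norm (fun n => abs_wzF_le n k) ?_
  simpa using (hgeom.mul_const (Real.pi ^ 2)).mul_const (6 * (2 ^ 3 * zeta 3))

theorem tendsto_wzG {n : ℕ} {a : ℝ}
    (ha : Tendsto (fun k : ℕ => halfBeta n k ^ 2 * (n + 1 / 2 + k)) atTop (𝓝 a)) :
    Tendsto (wzG n) atTop (𝓝 (weight n * a ^ 2 * (2 ^ 3 * zeta 3))) := by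
  have hx := tendsto_const_div_add_natCast ((n : ℝ) + 1 / 2) (n + 1 / 2)
  have hsum := tendsto_interlacedSum (s := 3) (by norm_num) n
  have hlim : Tendsto (wzG n) atTop _ :=
    ((ha.pow 2).const_mul (weight n)).mul
      ((((hx.const_add 1).add ((hx.pow 2).div_const 2)).mul hsum).add
        ((hx.pow 2).div_const (2 * ((n : ℝ) + 1 / 2) ^ 3)))
  simpa using hlim

theorem tendsto_wzG_single (n : ℕ) :
    Tendsto (wzG n) atTop
      (𝓝 (Pi.single (M := fun _ => ℝ) 0 (Real.pi ^ 2 * (2 ^ 3 * zeta 3)) n)) := by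
  cases n with
  | zero => simpa [weight] using tendsto_wzG tendsto_halfBeta_zero_left_sq_mul
  | succ n => simpa using tendsto_wzG (tendsto_halfBeta_succ_left_sq_mul n)

theorem hasSum_wzG_zero_right : HasSum (wzG · 0) (Real.pi ^ 2 * (2 ^ 3 * zeta 3)) := by
  have hbound : Summable fun n : ℕ =>
      (1 / 4 : ℝ) ^ n * Real.pi ^ 2 * (5 / 2 * (2 ^ 3 * zeta 3) + 4) :=
    ((summable_geometric_of_lt_one (by norm_num) (by norm_num)).mul_right _).mul_right _
  simpa only [tsum_pi_single] using
    hasSum_wz wzF_succ_sub tendsto_wzF hbound abs_wzG_le tendsto_wzG_single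

end Pair

theorem stmt_4 :
    Tendsto (fun N => ∑ n ∈ Finset.range N,
      ((2*n).choose n : ℝ) / ((2*(n:ℝ)+1)^2 * (-16)^n) *
        (5 * (∑ j ∈ Finset.range (n+1), 1 / (2*(j:ℝ)+1)^3) + 1 / (2*(n:ℝ)+1)^3))
      atTop (𝓝 (Real.pi^2 / 2 * zeta 3)) := by
  have hsum := hasSum_wzG_zero_right
  simp only [wzG_zero_right] at hsum
  rw [show Real.pi ^ 2 * (2 ^ 3 * zeta 3) = 16 * (Real.pi ^ 2 / 2 * zeta 3) by ring,
    hasSum_mul_left_iff (by norm_num)] at hsum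
  exact hsum.tendsto_sum_nat
end
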